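/- arXiv:2506.16378 — 2 statements merged into one kernel-verified Lean document; each statement's English description precedes it below -/
import Mathlib

section
/- Let n > 2m ≥ 2 be integers and let γ be a real number with 2m < γ < n. Then there is a constant C (depending on n, m, γ) such that for every x ∈ ℝⁿ, ∫_{ℝⁿ} ⟨y⟩^{-γ} |x−y|^{2m−n} dy ≤ C ⟨x⟩^{2m−γ}. -/
/-!
Write `a = 2m` and `R = ⟨x⟩`. The bound comes from comparing the integrand with rescaled copies of
the two profiles `|u|^{-p} (1+|u|)^{-q}`, with `(p, q) = (n - a, γ)` and `(p, q) = (γ, n - a)`.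
Both are integrable on `ℝⁿ`, because `p < n` (local integrability at the origin) and `p + q > n`
(decay at infinity); this is `integrable_profile`.

* If `|x - y| ≤ R/2`, then `⟨y⟩ ≥ R/2` since `⟨·⟩` is 1-Lipschitz, so the integrand is at most a
  constant times `R^{-γ} |x - y|^{a-n}`, and the first profile at `(x - y)/R` controls it.
* If `|x - y| ≥ R/2`, then `|x - y| ≥ (R + |y|)/5` and `⟨y⟩ ≥ |y|`, so the integrand is at most a
  constant times `|y|^{-γ} (R + |y|)^{a-n}`, and the second profile at `y/R` controls it.

In both cases the scaling factor is `R^{a-γ-n}` (`pointwise_bound`); integrating the profiles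
contributes `R^n` by change of variables, which leaves `R^{a-γ}`.
-/

open MeasureTheory

/-- Integrability of the radial profile, reduced by polar coordinates to
`t^{n-1-p} (1+t)^{-q}` on `(0, ∞)`, which is dominated by `t^{n-1-p}` on `(0, 1]` and by
`t^{n-1-p-q}` on `(1, ∞)`. -/
lemma integrable_profile (n : ℕ) (hn : 0 < n) (p q : ℝ) (hp : p < n)
    (hpq : (n : ℝ) < p + q) :
    Integrable (fun u : EuclideanSpace ℝ (Fin n) => ‖u‖ ^ (-p) * (1 + ‖u‖) ^ (-q)) := by
  have : Nonempty (Fin n) := ⟨⟨0, hn⟩⟩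
  have key := integrable_fun_norm_addHaar
    (volume : Measure (EuclideanSpace ℝ (Fin n)))
    (f := fun t : ℝ => t ^ (-p) * (1 + t) ^ (-q))
  refine key.2 ?_
  simp only [finrank_euclideanSpace, Fintype.card_fin, smul_eq_mul]
  have hmeas : Measurable (fun t : ℝ => t ^ (n - 1) * (t ^ (-p) * (1 + t) ^ (-q))) := by
    fun_prop
  have hpow : ∀ t : ℝ, 0 < t → t ^ (n - 1) * t ^ (-p) = t ^ ((n : ℝ) - 1 - p) := by
    intro t ht
    rw [← Real.rpow_natCast, ← Real.rpow_add ht, Nat.cast_sub hn]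
    congr 1
    push_cast
    ring
  rw [← Set.Ioc_union_Ioi_eq_Ioi (zero_le_one (α := ℝ))]
  refine IntegrableOn.union ?_ ?_
  · have h1 : IntegrableOn (fun t : ℝ => t ^ ((n : ℝ) - 1 - p)) (Set.Ioc 0 1) := by
      rw [← intervalIntegrable_iff_integrableOn_Ioc_of_le zero_le_one]
      exact intervalIntegral.intervalIntegrable_rpow' (by linarith)
    refine Integrable.mono' h1 hmeas.aestronglyMeasurable ?_
    filter_upwards [ae_restrict_mem measurableSet_Ioc] with t ht
    have ht0 : 0 < t := ht.1
    rw [Real.norm_of_nonneg (by positivity), ← mul_assoc, hpow t ht0]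
    exact mul_le_of_le_one_right (by positivity)
      (Real.rpow_le_one_of_one_le_of_nonpos (by linarith) (by linarith))
  · have h2 : IntegrableOn (fun t : ℝ => t ^ ((n : ℝ) - 1 - p + -q)) (Set.Ioi 1) :=
      integrableOn_Ioi_rpow_of_lt (by linarith) one_pos
    refine Integrable.mono' h2 hmeas.aestronglyMeasurable ?_
    filter_upwards [ae_restrict_mem measurableSet_Ioi] with t ht
    have ht0 : 0 < t := lt_trans one_pos ht
    rw [Real.norm_of_nonneg (by positivity), ← mul_assoc, hpow t ht0, Real.rpow_add ht0]
    exact mul_le_mul_of_nonneg_left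
      (Real.rpow_le_rpow_of_nonpos ht0 (by linarith) (by linarith)) (by positivity)

/-- The japanese bracket is 1-Lipschitz. -/
lemma bracket_le_add {E : Type*} [NormedAddCommGroup E] (x y : E) :
    Real.sqrt (1 + ‖x‖ ^ 2) ≤ Real.sqrt (1 + ‖y‖ ^ 2) + ‖x - y‖ := by
  have hJ : Real.sqrt (1 + ‖y‖ ^ 2) ^ 2 = 1 + ‖y‖ ^ 2 := Real.sq_sqrt (by positivity)
  have hyJ : ‖y‖ ≤ Real.sqrt (1 + ‖y‖ ^ 2) := Real.le_sqrt_of_sq_le (by linarith)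
  have hx : ‖x‖ ≤ ‖y‖ + ‖x - y‖ := by
    have := norm_add_le y (x - y)
    simpa using this
  refine Real.sqrt_le_iff.2 ⟨by positivity, ?_⟩
  nlinarith [norm_nonneg x, norm_nonneg y, norm_nonneg (x - y),
    mul_le_mul_of_nonneg_right hyJ (norm_nonneg (x - y))]

/-- The comparison of the integrand with the two profiles, with `R = ⟨x⟩`, `J = ⟨y⟩`,
`d = |x - y|`, `t = |y|` and `b = n - 2m`. -/
lemma pointwise_bound (R J d t γ b : ℝ) (hR : 0 < R) (ht : 0 < t) (hd : 0 ≤ d)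
    (hγ : 0 < γ) (hb : 0 < b) (h1 : R ≤ J + d) (h2 : t ≤ J) (h3 : t ≤ R + d) :
    J ^ (-γ) * d ^ (-b) ≤ R ^ (-γ + -b) *
      (4 ^ γ * ((R⁻¹ * d) ^ (-b) * (1 + R⁻¹ * d) ^ (-γ)) +
        5 ^ b * ((R⁻¹ * t) ^ (-γ) * (1 + R⁻¹ * t) ^ (-b))) := by
  have hRi : 0 < R⁻¹ := inv_pos.2 hR
  rcases hd.eq_or_lt with rfl | hd
  · -- here the left-hand side vanishes, by the convention `0 ^ (-b) = 0`
    rw [Real.zero_rpow (by linarith : -b ≠ 0), mul_zero]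
    positivity
  have hA : 0 ≤ 4 ^ γ * ((R⁻¹ * d) ^ (-b) * (1 + R⁻¹ * d) ^ (-γ)) := by positivity
  have hB : 0 ≤ 5 ^ b * ((R⁻¹ * t) ^ (-γ) * (1 + R⁻¹ * t) ^ (-b)) := by positivity
  have hRR : R * R⁻¹ = 1 := mul_inv_cancel₀ hR.ne'
  rw [Real.rpow_add hR]
  rcases le_total d (R / 2) with hdR | hdR
  · have e1 : J ^ (-γ) ≤ (4⁻¹ * (R * (1 + R⁻¹ * d))) ^ (-γ) := by
      refine Real.rpow_le_rpow_of_nonpos (by positivity) ?_ (by linarith)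
      have : R * (1 + R⁻¹ * d) = R + d := by field_simp
      linarith
    have e2 : (4⁻¹ * (R * (1 + R⁻¹ * d))) ^ (-γ)
        = 4 ^ γ * (R ^ (-γ) * (1 + R⁻¹ * d) ^ (-γ)) := by
      rw [Real.mul_rpow (by positivity) (by positivity),
        Real.mul_rpow (by positivity) (by positivity),
        Real.inv_rpow (by norm_num), Real.rpow_neg (by norm_num) γ, inv_inv]
    have e3 : d ^ (-b) = R ^ (-b) * (R⁻¹ * d) ^ (-b) := by
      rw [← Real.mul_rpow (by positivity) (by positivity), mul_inv_cancel_left₀ hR.ne']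
    calc J ^ (-γ) * d ^ (-b)
        ≤ 4 ^ γ * (R ^ (-γ) * (1 + R⁻¹ * d) ^ (-γ)) * d ^ (-b) :=
          mul_le_mul_of_nonneg_right (e1.trans_eq e2) (by positivity)
      _ = R ^ (-γ) * R ^ (-b) * (4 ^ γ * ((R⁻¹ * d) ^ (-b) * (1 + R⁻¹ * d) ^ (-γ))) := by
          rw [e3]; ring
      _ ≤ _ := mul_le_mul_of_nonneg_left (by linarith) (by positivity)
  · have e1 : d ^ (-b) ≤ (5⁻¹ * (R * (1 + R⁻¹ * t))) ^ (-b) := by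
      refine Real.rpow_le_rpow_of_nonpos (by positivity) ?_ (by linarith)
      have : R * (1 + R⁻¹ * t) = R + t := by field_simp
      linarith
    have e2 : (5⁻¹ * (R * (1 + R⁻¹ * t))) ^ (-b)
        = 5 ^ b * (R ^ (-b) * (1 + R⁻¹ * t) ^ (-b)) := by
      rw [Real.mul_rpow (by positivity) (by positivity),
        Real.mul_rpow (by positivity) (by positivity),
        Real.inv_rpow (by norm_num), Real.rpow_neg (by norm_num) b, inv_inv]
    have e3 : J ^ (-γ) ≤ R ^ (-γ) * (R⁻¹ * t) ^ (-γ) := by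
      rw [← Real.mul_rpow (by positivity) (by positivity), mul_inv_cancel_left₀ hR.ne']
      exact Real.rpow_le_rpow_of_nonpos ht h2 (by linarith)
    calc J ^ (-γ) * d ^ (-b)
        ≤ (R ^ (-γ) * (R⁻¹ * t) ^ (-γ)) * (5 ^ b * (R ^ (-b) * (1 + R⁻¹ * t) ^ (-b))) :=
          mul_le_mul e3 (e1.trans_eq e2) (by positivity) (by positivity)
      _ = R ^ (-γ) * R ^ (-b) * (5 ^ b * ((R⁻¹ * t) ^ (-γ) * (1 + R⁻¹ * t) ^ (-b))) := by
          ring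
      _ ≤ _ := mul_le_mul_of_nonneg_left (by linarith) (by positivity)

/-- For `2m < γ < n`, `∫ ⟨y⟩^{-γ} |x−y|^{2m−n} dy ≤ C ⟨x⟩^{2m−γ}`. -/
theorem stmt_1 (n m : ℕ) (hm : 1 ≤ m) (hn : 2 * m < n) (γ : ℝ)
    (hγ1 : 2 * (m : ℝ) < γ) (hγ2 : γ < n) :
    ∃ C > (0 : ℝ), ∀ x : EuclideanSpace ℝ (Fin n),
      ∫ y, Real.sqrt (1 + ‖y‖ ^ 2) ^ (-γ) * ‖x - y‖ ^ (2 * (m : ℝ) - n)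
        ≤ C * Real.sqrt (1 + ‖x‖ ^ 2) ^ (2 * (m : ℝ) - γ) := by
  have hn0 : 0 < n := by omega
  have : Nonempty (Fin n) := ⟨⟨0, hn0⟩⟩
  have hm' : (1 : ℝ) ≤ m := by exact_mod_cast hm
  have hγ0 : 0 < γ := by linarith
  obtain ⟨b, hb⟩ : ∃ b : ℝ, b = n - 2 * (m : ℝ) := ⟨_, rfl⟩
  have hb0 : 0 < b := by linarith
  set F : EuclideanSpace ℝ (Fin n) → ℝ := fun u => ‖u‖ ^ (-b) * (1 + ‖u‖) ^ (-γ) with hF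
  set G : EuclideanSpace ℝ (Fin n) → ℝ := fun u => ‖u‖ ^ (-γ) * (1 + ‖u‖) ^ (-b) with hG
  have hFi : Integrable F :=
    integrable_profile n hn0 b γ (by linarith) (by linarith)
  have hGi : Integrable G :=
    integrable_profile n hn0 γ b hγ2 (by linarith)
  have hF0 : 0 ≤ ∫ u, F u := integral_nonneg fun u => by positivity
  have hG0 : 0 ≤ ∫ u, G u := integral_nonneg fun u => by positivity
  -- the summand `1` only serves to make the constant positive
  refine ⟨4 ^ γ * (∫ u, F u) + 5 ^ b * (∫ u, G u) + 1, by positivity, fun x => ?_⟩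
  obtain ⟨R, hRdef⟩ : ∃ R, R = Real.sqrt (1 + ‖x‖ ^ 2) := ⟨_, rfl⟩
  have hR : 0 < R := by rw [hRdef]; positivity
  have hxR : ‖x‖ ≤ R := by rw [hRdef]; exact Real.le_sqrt_of_sq_le (by linarith)
  have hRi : R⁻¹ ≠ 0 := inv_ne_zero hR.ne'
  have hnorm : ∀ z : EuclideanSpace ℝ (Fin n), ‖R⁻¹ • z‖ = R⁻¹ * ‖z‖ := fun z => by
    rw [norm_smul, Real.norm_of_nonneg (inv_nonneg.2 hR.le)]
  have hFs : Integrable (fun y => F (R⁻¹ • (x - y))) :=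
    (hFi.comp_smul hRi).comp_sub_left x
  have hGs : Integrable (fun y => G (R⁻¹ • y)) := hGi.comp_smul hRi
  have hexp : 2 * (m : ℝ) - n = -b := by rw [hb]; ring
  rw [← hRdef, hexp]
  have hbound : ∫ y, Real.sqrt (1 + ‖y‖ ^ 2) ^ (-γ) * ‖x - y‖ ^ (-b)
      ≤ ∫ y, R ^ (-γ + -b) * (4 ^ γ * F (R⁻¹ • (x - y)) + 5 ^ b * G (R⁻¹ • y)) := by
    refine integral_mono_of_nonneg (.of_forall fun y => by positivity)
      (((hFs.const_mul _).add (hGs.const_mul _)).const_mul _) ?_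
    -- the point `y = 0` is excluded because `‖0‖ ^ (-γ) = 0` by convention
    have hne : ∀ᵐ y : EuclideanSpace ℝ (Fin n), y ≠ 0 := by
      rw [ae_iff]; simp
    filter_upwards [hne] with y hy
    simp only [hF, hG, hnorm]
    refine pointwise_bound R _ ‖x - y‖ ‖y‖ γ b hR (norm_pos_iff.2 hy) (norm_nonneg _) hγ0 hb0
      (hRdef ▸ bracket_le_add x y) (Real.le_sqrt_of_sq_le (by linarith)) ?_
    have := norm_sub_le x (x - y)
    rw [sub_sub_cancel] at this
    linarith
  refine hbound.trans ?_
  have hFint : ∫ y, F (R⁻¹ • (x - y)) = R ^ n * ∫ u, F u := by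
    rw [integral_sub_left_eq_self (fun z => F (R⁻¹ • z)) volume x,
      Measure.integral_comp_inv_smul_of_nonneg _ _ hR.le]
    simp
  have hGint : ∫ y, G (R⁻¹ • y) = R ^ n * ∫ u, G u := by
    rw [Measure.integral_comp_inv_smul_of_nonneg _ _ hR.le]
    simp
  have hRpow : R ^ (-γ + -b) * R ^ n = R ^ (2 * (m : ℝ) - γ) := by
    rw [← Real.rpow_natCast, ← Real.rpow_add hR, hb]
    congr 1; ring
  rw [integral_const_mul, integral_add (hFs.const_mul _) (hGs.const_mul _),
    integral_const_mul, integral_const_mul, hFint, hGint]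
  calc R ^ (-γ + -b) * (4 ^ γ * (R ^ n * ∫ u, F u) + 5 ^ b * (R ^ n * ∫ u, G u))
      = (4 ^ γ * (∫ u, F u) + 5 ^ b * (∫ u, G u)) * (R ^ (-γ + -b) * R ^ n) := by ring
    _ ≤ _ := by
      rw [hRpow]
      exact mul_le_mul_of_nonneg_right (by linarith) (by positivity)
end

section
/- Fix integers n > 2m ≥ 2 and j ≥ 0, a real η > −1, constants C₀ > 0 and λ₀ ∈ (0,1), and set N := ⌈n/2⌉ + 1. Let r₁, r₂ > 0 with r₁ ≥ 2 and r₁/2 ≤ r₂ ≤ 2r₁, and let σ ∈ {+1, −1}. Suppose a, b₁, b₂ : (0,1) → ℂ are N times continuously differentiable, vanish for λ ≥ λ₀, and satisfy for all 0 ≤ ℓ ≤ N and λ ∈ (0,1): |a^{(ℓ)}(λ)| ≤ C₀ λ^{η−ℓ}, |b₁^{(ℓ)}(λ)| ≤ C₀ λ^{-ℓ} ⟨λr₁⟩^{(n+1)/2−2m+j}, and |b₂^{(ℓ)}(λ)| ≤ C₀ λ^{-ℓ} ⟨λr₂⟩^{(1−n)/2}. Then |∫₀¹ e^{iλ(r₁+σ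 r₂)} a(λ) b₁(λ) b₂(λ) dλ| ≤ C ∫₀¹ λ^{η} ⟨λr₂⟩^{-(2m−1−j)} ⟨λ(r₁−r₂)⟩^{-2} dλ, where C depends only on n, m, j, η, C₀, λ₀. -/
/-!
The amplitude `f = a b₁ b₂` is, by the Leibniz rule and `⟨λr₁⟩ ≈ ⟨λr₂⟩`, a symbol of size
`w(λ) = λ^η ⟨λr₂⟩^{-(2m-1-j)}`: each derivative up to order two costs a factor `λ⁻¹`
(`SymbolTwo.mul`, `rpow_le_of_comparable`).

The phase is `sλ` with `s = r₁ + σ r₂`, and `|s| ≥ |r₁ - r₂|` for either sign. For `λ ≤ 1/|s|` the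
factor `⟨λ(r₁ - r₂)⟩⁻²` is at least `1/2`, so the absolute value of the integrand suffices. For
`λ > 1/|s|`, two integrations by parts (`integral_by_parts_twice`) produce
`(λs)⁻² w(λ) ≤ 2 w(λ) ⟨λ(r₁ - r₂)⟩⁻²`. There is no boundary term near `λ = 1`, where `f` vanishes;
the boundary terms at `δ = 1/|s|` are of size `δ w(δ)`, which is comparable to the integral of `w`
over `(δ/2, δ]`. The case `|s| ≤ 1` needs no oscillation. This is `oscillatory_bound`.
-/

open MeasureTheory

/-- `f` is a symbol on `(0,1)` of size `w`, up to order two: it is `C²` there and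
`|f^{(ℓ)}(x)| ≤ w(x) x^{-ℓ}` for `ℓ = 0, 1, 2`. The derivatives are carried as explicit functions. -/
def SymbolTwo (f : ℝ → ℂ) (w : ℝ → ℝ) : Prop :=
  ∃ f₁ f₂ : ℝ → ℂ, ContinuousOn f₂ (Set.Ioo 0 1) ∧ ∀ x ∈ Set.Ioo (0 : ℝ) 1,
    HasDerivAt f (f₁ x) x ∧ HasDerivAt f₁ (f₂ x) x ∧
    ‖f x‖ ≤ w x ∧ ‖f₁ x‖ ≤ w x / x ∧ ‖f₂ x‖ ≤ w x / x ^ 2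

lemma SymbolTwo.mono {f : ℝ → ℂ} {w v : ℝ → ℝ} (hf : SymbolTwo f w)
    (h : ∀ x ∈ Set.Ioo (0 : ℝ) 1, w x ≤ v x) : SymbolTwo f v := by
  obtain ⟨f₁, f₂, hc, H⟩ := hf
  refine ⟨f₁, f₂, hc, fun x hx => ?_⟩
  obtain ⟨h1, h2, h3, h4, h5⟩ := H x hx
  have hx0 : 0 < x := hx.1
  have hw := h x hx
  exact ⟨h1, h2, h3.trans hw, h4.trans (by gcongr), h5.trans (by gcongr)⟩

/-- Leibniz rule for symbols; `4` is the sum of the binomial coefficients of order two. -/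
lemma SymbolTwo.mul {f g : ℝ → ℂ} {w v : ℝ → ℝ} (hf : SymbolTwo f w) (hg : SymbolTwo g v) :
    SymbolTwo (fun x => f x * g x) (fun x => 4 * (w x * v x)) := by
  obtain ⟨f₁, f₂, hfc, H⟩ := hf
  obtain ⟨g₁, g₂, hgc, G⟩ := hg
  refine ⟨fun x => f₁ x * g x + f x * g₁ x,
    fun x => (f₂ x * g x + f₁ x * g₁ x) + (f₁ x * g₁ x + f x * g₂ x), ?_, fun x hx => ?_⟩
  · have c1 : ContinuousOn f (Set.Ioo 0 1) :=
      fun x hx => (H x hx).1.continuousAt.continuousWithinAt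
    have c2 : ContinuousOn f₁ (Set.Ioo 0 1) :=
      fun x hx => (H x hx).2.1.continuousAt.continuousWithinAt
    have c3 : ContinuousOn g (Set.Ioo 0 1) :=
      fun x hx => (G x hx).1.continuousAt.continuousWithinAt
    have c4 : ContinuousOn g₁ (Set.Ioo 0 1) :=
      fun x hx => (G x hx).2.1.continuousAt.continuousWithinAt
    fun_prop
  · obtain ⟨h1, h2, h3, h4, h5⟩ := H x hx
    obtain ⟨k1, k2, k3, k4, k5⟩ := G x hx
    have hx0 : 0 < x := hx.1
    have hw : 0 ≤ w x := (norm_nonneg _).trans h3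
    have hv : 0 ≤ v x := (norm_nonneg _).trans k3
    have key : ∀ (p q : ℂ) (P Q : ℝ), ‖p‖ ≤ P → ‖q‖ ≤ Q → ‖p * q‖ ≤ P * Q := by
      intro p q P Q hp hq
      rw [norm_mul]
      exact mul_le_mul hp hq (norm_nonneg _) ((norm_nonneg _).trans hp)
    refine ⟨h1.mul k1, (h2.mul k1).add (h1.mul k2), ?_, ?_, ?_⟩
    · have := key _ _ _ _ h3 k3
      nlinarith [mul_nonneg hw hv]
    · have e1 := key _ _ _ _ h4 k3
      have e2 := key _ _ _ _ h3 k4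
      have e : 0 ≤ w x * v x / x := by positivity
      refine (norm_add_le _ _).trans ?_
      have t1 : w x / x * v x = w x * v x / x := by ring
      have t2 : w x * (v x / x) = w x * v x / x := by ring
      have t3 : 4 * (w x * v x) / x = 4 * (w x * v x / x) := by ring
      rw [t3]; linarith
    · have e1 := key _ _ _ _ h5 k3
      have e2 := key _ _ _ _ h4 k4
      have e3 := key _ _ _ _ h3 k5
      have t1 : w x / x ^ 2 * v x = w x * v x / x ^ 2 := by ring
      have t2 : w x / x * (v x / x) = w x * v x / x ^ 2 := by ring
      have t3 : w x * (v x / x ^ 2) = w x * v x / x ^ 2 := by ring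
      have t4 : 4 * (w x * v x) / x ^ 2 = 4 * (w x * v x / x ^ 2) := by ring
      refine (norm_add_le _ _).trans ((add_le_add (norm_add_le _ _) (norm_add_le _ _)).trans ?_)
      rw [t4]; linarith

lemma SymbolTwo.of_contDiffOn {f : ℝ → ℂ} {w : ℝ → ℝ} {N : ℕ} (hN : 2 ≤ N)
    (hf : ContDiffOn ℝ N f (Set.Ioo 0 1))
    (hb : ∀ ℓ ≤ N, ∀ x ∈ Set.Ioo (0 : ℝ) 1,
      ‖iteratedDerivWithin ℓ f (Set.Ioo 0 1) x‖ ≤ w x * x ^ (-(ℓ : ℝ))) : SymbolTwo f w := by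
  have hu : UniqueDiffOn ℝ (Set.Ioo (0 : ℝ) 1) := isOpen_Ioo.uniqueDiffOn
  have hd : ∀ ℓ : ℕ, ℓ < N → ∀ x ∈ Set.Ioo (0 : ℝ) 1,
      HasDerivAt (iteratedDerivWithin ℓ f (Set.Ioo 0 1))
        (iteratedDerivWithin (ℓ + 1) f (Set.Ioo 0 1) x) x := by
    intro ℓ hℓ x hx
    have := (hf.differentiableOn_iteratedDerivWithin (by exact_mod_cast hℓ) hu) x hx
    rw [iteratedDerivWithin_succ]
    exact this.hasDerivWithinAt.hasDerivAt (isOpen_Ioo.mem_nhds hx)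
  refine ⟨iteratedDerivWithin 1 f (Set.Ioo 0 1), iteratedDerivWithin 2 f (Set.Ioo 0 1),
    hf.continuousOn_iteratedDerivWithin (by exact_mod_cast hN) hu, fun x hx => ?_⟩
  refine ⟨by simpa using hd 0 (by omega) x hx, hd 1 (by omega) x hx, ?_, ?_, ?_⟩
  · simpa using hb 0 (by omega) x hx
  · have := hb 1 (by omega) x hx
    rwa [Nat.cast_one, Real.rpow_neg_one, ← div_eq_mul_inv] at this
  · have := hb 2 hN x hx
    rwa [Real.rpow_neg hx.1.le, Real.rpow_natCast, ← div_eq_mul_inv] at this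

/-- Comparable positive numbers have comparable powers, whatever the sign of the exponent. -/
lemma rpow_le_of_comparable {x y : ℝ} (hx : 0 < x) (hy : 0 < y) (hxy : x ≤ 2 * y) (hyx : y ≤ 2 * x)
    (p : ℝ) : x ^ p ≤ 2 ^ |p| * y ^ p := by
  rcases le_total 0 p with hp | hp
  · rw [abs_of_nonneg hp, ← Real.mul_rpow (by norm_num) hy.le]
    exact Real.rpow_le_rpow hx.le hxy hp
  · rw [abs_of_nonpos hp]
    have h1 : (2 * x) ^ p ≤ y ^ p := Real.rpow_le_rpow_of_nonpos hy hyx hp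
    rw [Real.mul_rpow (by norm_num) hx.le] at h1
    have h2 : (2 : ℝ) ^ (-p) * 2 ^ p = 1 := by
      rw [← Real.rpow_add (by norm_num)]; simp
    calc x ^ p = 2 ^ (-p) * (2 ^ p * x ^ p) := by rw [← mul_assoc, h2, one_mul]
      _ ≤ _ := by gcongr

lemma bracket_comparable {x y : ℝ} (h : |x| ≤ 2 * |y|) :
    Real.sqrt (1 + x ^ 2) ≤ 2 * Real.sqrt (1 + y ^ 2) := by
  rw [Real.sqrt_le_left (by positivity), mul_pow, Real.sq_sqrt (by positivity)]
  have := pow_le_pow_left₀ (abs_nonneg x) h 2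
  rw [mul_pow, sq_abs, sq_abs] at this
  linarith

lemma bracket_pos (x : ℝ) : 0 < Real.sqrt (1 + x ^ 2) := Real.sqrt_pos.2 (by positivity)

lemma bracket_rpow_neg_two (x : ℝ) : Real.sqrt (1 + x ^ 2) ^ (-(2 : ℝ)) = 1 / (1 + x ^ 2) := by
  rw [Real.rpow_neg (Real.sqrt_nonneg _), Real.rpow_two, Real.sq_sqrt (by positivity), one_div]

/-- The weight `λ^η ⟨λr⟩^M` against which all amplitudes are measured. -/
noncomputable def wt (η M r x : ℝ) : ℝ := x ^ η * Real.sqrt (1 + (x * r) ^ 2) ^ M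

lemma wt_nonneg {η M r x : ℝ} (hx : 0 < x) : 0 ≤ wt η M r x := by
  unfold wt; positivity

lemma wt_le_of_comparable {η M r x y : ℝ} (hx : 0 < x) (hy : 0 < y) (hxy : x ≤ 2 * y)
    (hyx : y ≤ 2 * x) : wt η M r x ≤ 2 ^ |η| * 2 ^ |M| * wt η M r y := by
  have h1 := rpow_le_of_comparable hx hy hxy hyx η
  have br : ∀ u v : ℝ, 0 < u → 0 < v → u ≤ 2 * v →
      Real.sqrt (1 + (u * r) ^ 2) ≤ 2 * Real.sqrt (1 + (v * r) ^ 2) := by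
    intro u v hu hv huv
    apply bracket_comparable
    rw [abs_mul, abs_mul, abs_of_pos hu, abs_of_pos hv, ← mul_assoc]
    gcongr
  have h2 := rpow_le_of_comparable (bracket_pos (x * r)) (bracket_pos (y * r))
    (br x y hx hy hxy) (br y x hy hx hyx) M
  calc wt η M r x ≤ (2 ^ |η| * y ^ η) * (2 ^ |M| * Real.sqrt (1 + (y * r) ^ 2) ^ M) := by
        unfold wt; gcongr
    _ = _ := by unfold wt; ring

lemma continuous_bracket_rpow (r p : ℝ) :
    Continuous fun x : ℝ => Real.sqrt (1 + (x * r) ^ 2) ^ p := by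
  refine Continuous.rpow_const (by fun_prop) fun x => Or.inl (bracket_pos _).ne'

lemma integrableOn_rpow_mul {η : ℝ} (hη : -1 < η) {g : ℝ → ℝ} (hg : Continuous g) :
    IntegrableOn (fun x => x ^ η * g x) (Set.Ioo 0 1) := by
  have h := (intervalIntegral.intervalIntegrable_rpow' (a := 0) (b := 1) hη).mul_continuousOn
    hg.continuousOn
  rw [intervalIntegrable_iff_integrableOn_Ioo_of_le zero_le_one] at h
  exact h

/-- Two integrations by parts on `[δ, c]`, in the form of one exact primitive:
`(e^{isx}(f/(is) + f'/s²))' = e^{isx}(f + f''/s²)`. -/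
lemma integral_by_parts_twice {f f₁ f₂ : ℝ → ℂ} {s δ c : ℝ} (hs : s ≠ 0) (hδ : δ ≤ c)
    (hf : ∀ x ∈ Set.Icc δ c, HasDerivAt f (f₁ x) x)
    (hf₁ : ∀ x ∈ Set.Icc δ c, HasDerivAt f₁ (f₂ x) x)
    (hf₂ : ContinuousOn f₂ (Set.Icc δ c)) (hc : f c = 0) (hc₁ : f₁ c = 0) :
    ‖∫ x in Set.Ioc δ c, Complex.exp (Complex.I * Complex.ofReal (s * x)) * f x‖ ≤
      ‖f δ‖ / |s| + ‖f₁ δ‖ / s ^ 2 + ∫ x in Set.Ioc δ c, ‖f₂ x‖ / s ^ 2 := by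
  have hsC : (s : ℂ) ≠ 0 := by exact_mod_cast hs
  set e : ℝ → ℂ := fun x => Complex.exp (Complex.I * Complex.ofReal (s * x)) with he
  have hed : ∀ x, HasDerivAt e (e x * (Complex.I * s)) x := by
    intro x
    have h1 : HasDerivAt (fun x : ℝ => Complex.I * Complex.ofReal (s * x)) (Complex.I * s) x := by
      have := ((hasDerivAt_id x).const_mul s).ofReal_comp.const_mul Complex.I
      simpa using this
    exact h1.cexp
  have hen : ∀ x, ‖e x‖ = 1 := by
    intro x
    rw [he]
    simp only
    rw [mul_comm, Complex.norm_exp_ofReal_mul_I]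
  have hec : Continuous e := by rw [he]; fun_prop
  have hfc : ContinuousOn f (Set.Icc δ c) := fun x hx => (hf x hx).continuousAt.continuousWithinAt
  have hG : ∀ x ∈ Set.uIcc δ c, HasDerivAt
      (fun x => e x * (f x * (-Complex.I / s) + f₁ x * (1 / (s : ℂ) ^ 2)))
      (e x * f x + e x * (f₂ x * (1 / (s : ℂ) ^ 2))) x := by
    intro x hx
    rw [Set.uIcc_of_le hδ] at hx
    have := (hed x).mul (((hf x hx).mul_const (-Complex.I / s)).add
      ((hf₁ x hx).mul_const (1 / (s : ℂ) ^ 2)))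
    refine this.congr_deriv ?_
    simp only [Pi.add_apply]
    field_simp
    ring_nf
    simp only [Complex.I_sq]
    ring
  have i1 : IntervalIntegrable (fun x => e x * f x) volume δ c :=
    ContinuousOn.intervalIntegrable_of_Icc hδ (by fun_prop)
  have i2 : IntervalIntegrable (fun x => e x * (f₂ x * (1 / (s : ℂ) ^ 2))) volume δ c :=
    ContinuousOn.intervalIntegrable_of_Icc hδ (by fun_prop)
  have ftc := intervalIntegral.integral_eq_sub_of_hasDerivAt hG (i1.add i2)
  rw [intervalIntegral.integral_add i1 i2, hc, hc₁] at ftc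
  rw [← intervalIntegral.integral_of_le hδ]
  have e1 : (∫ x in δ..c, e x * f x) =
      -(e δ * (f δ * (-Complex.I / s) + f₁ δ * (1 / (s : ℂ) ^ 2))) -
        ∫ x in δ..c, e x * (f₂ x * (1 / (s : ℂ) ^ 2)) := by
    rw [eq_sub_iff_add_eq, ftc]; simp
  have b1 : ‖e δ * (f δ * (-Complex.I / s) + f₁ δ * (1 / (s : ℂ) ^ 2))‖ ≤
      ‖f δ‖ / |s| + ‖f₁ δ‖ / s ^ 2 := by
    rw [norm_mul, hen, one_mul]
    refine (norm_add_le _ _).trans (le_of_eq ?_)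
    simp [div_eq_mul_inv]
  have b2 : ‖∫ x in δ..c, e x * (f₂ x * (1 / (s : ℂ) ^ 2))‖ ≤
      ∫ x in Set.Ioc δ c, ‖f₂ x‖ / s ^ 2 := by
    rw [intervalIntegral.integral_of_le hδ]
    refine (norm_integral_le_integral_norm _).trans (le_of_eq ?_)
    congr 1
    ext x
    rw [norm_mul, hen]
    simp [div_eq_mul_inv]
  rw [e1]
  refine (norm_sub_le _ _).trans ?_
  rw [norm_neg]
  exact add_le_add b1 b2

/-- Oscillatory integral bound for a symbol of size `K λ^η ⟨λr⟩^M` and phase `sλ`: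
no oscillation is used for `λ ≤ 1/|s|`, two integrations by parts are used for `λ > 1/|s|`. -/
lemma oscillatory_bound {η M r s d K lam0 : ℝ} (hη : -1 < η) (hds : |d| ≤ |s|) (hK : 0 ≤ K)
    (hlam : lam0 < 1) {f : ℝ → ℂ} (hv : ∀ x, lam0 ≤ x → f x = 0)
    (hf : SymbolTwo f fun x => K * wt η M r x) :
    ‖∫ x in Set.Ioo (0 : ℝ) 1, Complex.exp (Complex.I * Complex.ofReal (s * x)) * f x‖ ≤
      (4 + 8 * (2 ^ |η| * 2 ^ |M|)) * K *
        ∫ x in Set.Ioo (0 : ℝ) 1, wt η M r x * Real.sqrt (1 + (x * d) ^ 2) ^ (-(2 : ℝ)) := by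
  obtain ⟨f₁, f₂, hf₂c, H⟩ := hf
  set A : ℝ := 2 ^ |η| * 2 ^ |M| with hA
  have hA0 : 0 ≤ A := by positivity
  set B : ℝ → ℝ := fun x => wt η M r x * Real.sqrt (1 + (x * d) ^ 2) ^ (-(2 : ℝ)) with hB
  have hBi : IntegrableOn B (Set.Ioo 0 1) := by
    have := integrableOn_rpow_mul hη
      ((continuous_bracket_rpow r M).mul (continuous_bracket_rpow d (-2)))
    refine this.congr_fun (fun x _ => ?_) measurableSet_Ioo
    simp only [hB, wt, Pi.mul_apply, mul_assoc]
  have hwi : IntegrableOn (wt η M r) (Set.Ioo 0 1) :=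
    integrableOn_rpow_mul hη (continuous_bracket_rpow r M)
  have hB0 : ∀ x ∈ Set.Ioo (0 : ℝ) 1, 0 ≤ B x := fun x hx =>
    mul_nonneg (wt_nonneg hx.1) (Real.rpow_nonneg (Real.sqrt_nonneg _) _)
  have hBI : 0 ≤ ∫ x in Set.Ioo (0 : ℝ) 1, B x := setIntegral_nonneg measurableSet_Ioo hB0
  have hds2 : d ^ 2 ≤ s ^ 2 := sq_le_sq.2 hds
  have near : ∀ x, 0 < x → x * |s| ≤ 1 → wt η M r x ≤ 2 * B x := by
    intro x hx hxs
    have h1 : (x * d) ^ 2 ≤ 1 := by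
      have : (x * |s|) ^ 2 ≤ 1 := pow_le_one₀ (by positivity) hxs
      rw [mul_pow, sq_abs] at this
      rw [mul_pow]
      nlinarith [sq_nonneg x]
    have hw := wt_nonneg (η := η) (M := M) (r := r) hx
    simp only [hB, bracket_rpow_neg_two]
    have : (1 : ℝ) / 2 ≤ 1 / (1 + (x * d) ^ 2) := by gcongr; linarith
    nlinarith
  have far : ∀ x, 0 < x → 1 ≤ x * |s| → wt η M r x / x ^ 2 / s ^ 2 ≤ 2 * B x := by
    intro x hx hxs
    have h1 : 1 ≤ x ^ 2 * s ^ 2 := by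
      have : 1 ≤ (x * |s|) ^ 2 := one_le_pow₀ hxs
      rwa [mul_pow, sq_abs] at this
    have hw := wt_nonneg (η := η) (M := M) (r := r) hx
    simp only [hB, bracket_rpow_neg_two]
    have : 1 / (x ^ 2 * s ^ 2) ≤ 2 * (1 / (1 + (x * d) ^ 2)) := by
      rw [mul_one_div, div_le_div_iff₀ (by linarith) (by positivity), mul_pow]
      nlinarith [sq_nonneg x]
    calc wt η M r x / x ^ 2 / s ^ 2 = wt η M r x * (1 / (x ^ 2 * s ^ 2)) := by
          rw [div_div, mul_one_div]
      _ ≤ wt η M r x * (2 * (1 / (1 + (x * d) ^ 2))) := by gcongr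
      _ = _ := by ring
  set e : ℝ → ℂ := fun x => Complex.exp (Complex.I * Complex.ofReal (s * x)) with he
  have hen : ∀ x, ‖e x‖ = 1 := by
    intro x
    rw [he]
    simp only
    rw [mul_comm, Complex.norm_exp_ofReal_mul_I]
  have hec : Continuous e := by rw [he]; fun_prop
  have hfc : ContinuousOn f (Set.Ioo 0 1) :=
    fun x hx => (H x hx).1.continuousAt.continuousWithinAt
  have hnb : ∀ x ∈ Set.Ioo (0 : ℝ) 1, ‖e x * f x‖ ≤ K * wt η M r x := by
    intro x hx
    rw [norm_mul, hen, one_mul]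
    exact (H x hx).2.2.1
  rcases le_or_gt |s| 1 with hs1 | hs1
  · have : ‖∫ x in Set.Ioo (0 : ℝ) 1, e x * f x‖ ≤ ∫ x in Set.Ioo (0 : ℝ) 1, K * (2 * B x) := by
      refine norm_integral_le_of_norm_le ((hBi.const_mul 2).const_mul K) ?_
      refine (ae_restrict_iff' measurableSet_Ioo).2 (Filter.Eventually.of_forall fun x hx => ?_)
      refine (hnb x hx).trans ?_
      have := near x hx.1 (by nlinarith [hx.1, hx.2, abs_nonneg s])
      gcongr
    rw [integral_const_mul, integral_const_mul] at this
    refine this.trans ?_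
    have h0 : 0 ≤ K * ∫ x in Set.Ioo (0 : ℝ) 1, B x := mul_nonneg hK hBI
    nlinarith [mul_nonneg hA0 h0]
  · have hs0 : 0 < |s| := by linarith
    set δ : ℝ := 1 / |s| with hδ
    have hδ0 : 0 < δ := by positivity
    have hδ1 : δ < 1 := by rw [hδ, div_lt_one hs0]; exact hs1
    have hδs : δ * |s| = 1 := by rw [hδ]; field_simp
    obtain ⟨c, hc, hc1⟩ : ∃ c, max lam0 δ < c ∧ c < 1 := exists_between (max_lt hlam hδ1)
    have hcl : lam0 < c := (le_max_left _ _).trans_lt hc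
    have hcδ : δ < c := (le_max_right _ _).trans_lt hc
    have hc0 : 0 < c := hδ0.trans hcδ
    have fc : f c = 0 := hv c hcl.le
    have f₁c : f₁ c = 0 := by
      have h1 := (H c ⟨hc0, hc1⟩).1
      have h2 : HasDerivAt f 0 c := by
        refine (hasDerivAt_const c (0 : ℂ)).congr_of_eventuallyEq ?_
        filter_upwards [lt_mem_nhds hcl] with x hx using hv x hx.le
      exact h1.unique h2
    have hsub : Set.Icc δ c ⊆ Set.Ioo 0 1 := fun x hx => ⟨hδ0.trans_le hx.1, hx.2.trans_lt hc1⟩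
    have hint : IntegrableOn (fun x => e x * f x) (Set.Ioo 0 1) := by
      refine (hwi.const_mul K).mono' ?_ ?_
      · exact ((hec.continuousOn.mul hfc)).aestronglyMeasurable measurableSet_Ioo
      · exact (ae_restrict_iff' measurableSet_Ioo).2 (Filter.Eventually.of_forall hnb)
    have hun : Set.Ioc 0 δ ∪ Set.Ioc δ c = Set.Ioc 0 c := Set.Ioc_union_Ioc_eq_Ioc hδ0.le hcδ.le
    have hsub0 : Set.Ioc 0 c ⊆ Set.Ioo 0 1 := fun x hx => ⟨hx.1, hx.2.trans_lt hc1⟩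
    have s1 : Set.Ioc 0 δ ⊆ Set.Ioo 0 1 := fun x hx => ⟨hx.1, hx.2.trans_lt hδ1⟩
    have s2 : Set.Ioc δ c ⊆ Set.Ioo 0 1 := Set.Ioc_subset_Icc_self.trans hsub
    have s3 : Set.Ioc (δ / 2) δ ⊆ Set.Ioo 0 1 :=
      fun x hx => ⟨(half_pos hδ0).trans hx.1, hx.2.trans_lt hδ1⟩
    have hsplit : (∫ x in Set.Ioo (0 : ℝ) 1, e x * f x) =
        (∫ x in Set.Ioc 0 δ, e x * f x) + ∫ x in Set.Ioc δ c, e x * f x := by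
      rw [← setIntegral_union (Set.Ioc_disjoint_Ioc_of_le le_rfl) measurableSet_Ioc
        (hint.mono_set s1) (hint.mono_set s2), hun]
      refine (setIntegral_eq_of_subset_of_forall_sdiff_eq_zero measurableSet_Ioo hsub0 ?_)
      intro x hx
      have : c < x := by
        by_contra h
        exact hx.2 ⟨hx.1.1, not_lt.1 h⟩
      rw [hv x (hcl.trans this).le, mul_zero]
    have mono : ∀ S ⊆ Set.Ioo (0 : ℝ) 1, (∫ x in S, B x) ≤ ∫ x in Set.Ioo (0 : ℝ) 1, B x := by
      intro S hS
      refine setIntegral_mono_set hBi ?_ (Filter.Eventually.of_forall hS)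
      exact (ae_restrict_iff' measurableSet_Ioo).2 (Filter.Eventually.of_forall hB0)
    have n1 : ‖∫ x in Set.Ioc 0 δ, e x * f x‖ ≤ 2 * K * ∫ x in Set.Ioo (0 : ℝ) 1, B x := by
      have : ‖∫ x in Set.Ioc 0 δ, e x * f x‖ ≤ ∫ x in Set.Ioc 0 δ, (2 * K) * B x := by
        refine norm_integral_le_of_norm_le ((hBi.mono_set s1).const_mul _) ?_
        refine (ae_restrict_iff' measurableSet_Ioc).2 (Filter.Eventually.of_forall fun x hx => ?_)
        refine (hnb x (s1 hx)).trans ?_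
        have := near x hx.1 (by rw [← hδs]; gcongr; exact hx.2)
        nlinarith
      rw [integral_const_mul] at this
      exact this.trans (mul_le_mul_of_nonneg_left (mono _ s1) (by positivity))
    have n2 : (∫ x in Set.Ioc δ c, ‖f₂ x‖ / s ^ 2) ≤ 2 * K * ∫ x in Set.Ioo (0 : ℝ) 1, B x := by
      have : (∫ x in Set.Ioc δ c, ‖f₂ x‖ / s ^ 2) ≤ ∫ x in Set.Ioc δ c, (2 * K) * B x := by
        refine setIntegral_mono_on ?_ ((hBi.mono_set s2).const_mul _) measurableSet_Ioc ?_
        · have : ContinuousOn (fun x => ‖f₂ x‖ / s ^ 2) (Set.Icc δ c) :=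
            ((hf₂c.mono hsub).norm).div_const _
          exact this.integrableOn_Icc.mono_set Set.Ioc_subset_Icc_self
        · intro x hx
          have h5 := (H x (s2 hx)).2.2.2.2
          have := far x (s2 hx).1 (by rw [← hδs]; gcongr; exact hx.1.le)
          calc ‖f₂ x‖ / s ^ 2 ≤ K * wt η M r x / x ^ 2 / s ^ 2 := by gcongr
            _ = K * (wt η M r x / x ^ 2 / s ^ 2) := by ring
            _ ≤ K * (2 * B x) := by gcongr
            _ = _ := by ring
      rw [integral_const_mul] at this
      exact this.trans (mul_le_mul_of_nonneg_left (mono _ s2) (by positivity))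
    -- The boundary terms at `δ` are absorbed by the mass of the weight on `(δ/2, δ]`.
    have n3 : δ * wt η M r δ ≤ 4 * A * ∫ x in Set.Ioo (0 : ℝ) 1, B x := by
      have : (∫ x in Set.Ioc (δ / 2) δ, wt η M r δ) ≤ ∫ x in Set.Ioc (δ / 2) δ, (2 * A) * B x := by
        refine setIntegral_mono_on (by simp) ((hBi.mono_set s3).const_mul _)
          measurableSet_Ioc ?_
        intro x hx
        have hx0 := (s3 hx).1
        have h1 : wt η M r δ ≤ A * wt η M r x :=
          wt_le_of_comparable hδ0 hx0 (by linarith [hx.1]) (by linarith [hx.2])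
        have h2 := near x hx0 (by rw [← hδs]; gcongr; exact hx.2)
        nlinarith
      rw [integral_const_mul, setIntegral_const, smul_eq_mul, measureReal_def, Real.volume_Ioc,
        ENNReal.toReal_ofReal (by linarith)] at this
      have h3 := mono _ s3
      nlinarith
    have n4 : ‖f δ‖ / |s| + ‖f₁ δ‖ / s ^ 2 ≤ 2 * K * (δ * wt η M r δ) := by
      obtain ⟨-, -, h3, h4, -⟩ := H δ ⟨hδ0, hδ1⟩
      have e1 : ‖f δ‖ / |s| ≤ K * (δ * wt η M r δ) := by
        calc ‖f δ‖ / |s| = ‖f δ‖ * δ := by rw [hδ, mul_one_div]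
          _ ≤ (K * wt η M r δ) * δ := by gcongr
          _ = _ := by ring
      have e2 : ‖f₁ δ‖ / s ^ 2 ≤ K * (δ * wt η M r δ) := by
        calc ‖f₁ δ‖ / s ^ 2 = ‖f₁ δ‖ * δ ^ 2 := by
              rw [hδ, div_pow, one_pow, sq_abs, mul_one_div]
          _ ≤ (K * wt η M r δ / δ) * δ ^ 2 := by gcongr
          _ = _ := by field_simp
      linarith
    have ibp := integral_by_parts_twice (f := f) (f₁ := f₁) (f₂ := f₂) (abs_pos.1 hs0) hcδ.le
      (fun x hx => (H x (hsub hx)).1) (fun x hx => (H x (hsub hx)).2.1) (hf₂c.mono hsub) fc f₁c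
    have n5 : 2 * K * (δ * wt η M r δ) ≤ 2 * K * (4 * A * ∫ x in Set.Ioo (0 : ℝ) 1, B x) := by
      gcongr
    rw [hsplit]
    refine (norm_add_le _ _).trans ?_
    linarith

/-- Bound on `Λ_{j,η}(r₁,r₂)` when `r₁ ≈ r₂ ≫ 1`. -/
theorem stmt_6 (n m j : ℕ) (hm : 1 ≤ m) (hn : 2 * m < n) (η : ℝ) (hη : -1 < η)
    (C₀ : ℝ) (hC₀ : 0 < C₀) (lam0 : ℝ) (hlam0 : 0 < lam0) (hlam0' : lam0 < 1) :
    ∃ C > (0 : ℝ), ∀ r₁ r₂ : ℝ, 0 < r₁ → 2 ≤ r₁ → 0 < r₂ → r₁ / 2 ≤ r₂ → r₂ ≤ 2 * r₁ →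
      ∀ σ : ℝ, (σ = 1 ∨ σ = -1) →
      ∀ a b₁ b₂ : ℝ → ℂ,
        ContDiffOn ℝ ((n + 1) / 2 + 1 : ℕ) a (Set.Ioo 0 1) →
        ContDiffOn ℝ ((n + 1) / 2 + 1 : ℕ) b₁ (Set.Ioo 0 1) →
        ContDiffOn ℝ ((n + 1) / 2 + 1 : ℕ) b₂ (Set.Ioo 0 1) →
        (∀ lam : ℝ, lam0 ≤ lam → a lam = 0) →
        (∀ lam : ℝ, lam0 ≤ lam → b₁ lam = 0) →
        (∀ lam : ℝ, lam0 ≤ lam → b₂ lam = 0) →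
        (∀ ℓ ≤ (n + 1) / 2 + 1, ∀ lam ∈ Set.Ioo (0 : ℝ) 1,
          ‖iteratedDerivWithin ℓ a (Set.Ioo 0 1) lam‖ ≤ C₀ * lam ^ (η - ℓ)) →
        (∀ ℓ ≤ (n + 1) / 2 + 1, ∀ lam ∈ Set.Ioo (0 : ℝ) 1,
          ‖iteratedDerivWithin ℓ b₁ (Set.Ioo 0 1) lam‖ ≤
            C₀ * lam ^ (-(ℓ : ℝ)) *
              Real.sqrt (1 + (lam * r₁) ^ 2) ^ (((n : ℝ) + 1) / 2 - 2 * m + j)) →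
        (∀ ℓ ≤ (n + 1) / 2 + 1, ∀ lam ∈ Set.Ioo (0 : ℝ) 1,
          ‖iteratedDerivWithin ℓ b₂ (Set.Ioo 0 1) lam‖ ≤
            C₀ * lam ^ (-(ℓ : ℝ)) *
              Real.sqrt (1 + (lam * r₂) ^ 2) ^ ((1 - (n : ℝ)) / 2)) →
        ‖∫ lam in Set.Ioo (0 : ℝ) 1,
            Complex.exp (Complex.I * Complex.ofReal ((r₁ + σ * r₂) * lam)) *
              (a lam * b₁ lam * b₂ lam)‖ ≤
          C * ∫ lam in Set.Ioo (0 : ℝ) 1,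
            lam ^ η * Real.sqrt (1 + (lam * r₂) ^ 2) ^ (-(2 * (m : ℝ) - 1 - j)) *
              Real.sqrt (1 + (lam * (r₁ - r₂)) ^ 2) ^ (-(2 : ℝ)) := by
  set p : ℝ := ((n : ℝ) + 1) / 2 - 2 * m + j with hp
  set q : ℝ := (1 - (n : ℝ)) / 2 with hq
  set M : ℝ := -(2 * (m : ℝ) - 1 - j) with hM
  have hpq : p + q = M := by rw [hp, hq, hM]; ring
  refine ⟨(4 + 8 * (2 ^ |η| * 2 ^ |M|)) * (16 * C₀ ^ 3 * 2 ^ |p|), by positivity, ?_⟩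
  intro r₁ r₂ hr₁ _ hr₂ h12 h21 σ hσ a b₁ b₂ ha hb₁ hb₂ hva _ _ hda hdb₁ hdb₂
  have sa : SymbolTwo a fun x => C₀ * x ^ η := by
    refine SymbolTwo.of_contDiffOn (by omega) ha fun ℓ hℓ x hx => ?_
    rw [mul_assoc, ← Real.rpow_add hx.1]
    exact hda ℓ hℓ x hx
  have sb₁ : SymbolTwo b₁ fun x => C₀ * Real.sqrt (1 + (x * r₁) ^ 2) ^ p := by
    refine SymbolTwo.of_contDiffOn (by omega) hb₁ fun ℓ hℓ x hx => ?_
    refine (hdb₁ ℓ hℓ x hx).trans (le_of_eq (by ring))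
  have sb₂ : SymbolTwo b₂ fun x => C₀ * Real.sqrt (1 + (x * r₂) ^ 2) ^ q := by
    refine SymbolTwo.of_contDiffOn (by omega) hb₂ fun ℓ hℓ x hx => ?_
    refine (hdb₂ ℓ hℓ x hx).trans (le_of_eq (by ring))
  have sf : SymbolTwo (fun x => a x * b₁ x * b₂ x)
      fun x => (16 * C₀ ^ 3 * 2 ^ |p|) * wt η M r₂ x := by
    refine ((sa.mul sb₁).mul sb₂).mono fun x hx => ?_
    have hx0 : 0 < x := hx.1
    have h1 : Real.sqrt (1 + (x * r₁) ^ 2) ^ p ≤ 2 ^ |p| * Real.sqrt (1 + (x * r₂) ^ 2) ^ p := by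
      refine rpow_le_of_comparable (bracket_pos _) (bracket_pos _)
        (bracket_comparable ?_) (bracket_comparable ?_) p
      · rw [abs_of_pos (by positivity), abs_of_pos (by positivity)]
        nlinarith
      · rw [abs_of_pos (by positivity), abs_of_pos (by positivity)]
        nlinarith
    calc 4 * (4 * (C₀ * x ^ η * (C₀ * Real.sqrt (1 + (x * r₁) ^ 2) ^ p)) *
          (C₀ * Real.sqrt (1 + (x * r₂) ^ 2) ^ q))
        ≤ 4 * (4 * (C₀ * x ^ η * (C₀ * (2 ^ |p| * Real.sqrt (1 + (x * r₂) ^ 2) ^ p))) *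
          (C₀ * Real.sqrt (1 + (x * r₂) ^ 2) ^ q)) := by gcongr
      _ = 16 * C₀ ^ 3 * 2 ^ |p| * (x ^ η *
          (Real.sqrt (1 + (x * r₂) ^ 2) ^ p * Real.sqrt (1 + (x * r₂) ^ 2) ^ q)) := by ring
      _ = _ := by rw [← Real.rpow_add (bracket_pos _), hpq, wt]
  have hds : |r₁ - r₂| ≤ |r₁ + σ * r₂| := by
    rcases hσ with rfl | rfl
    · rw [one_mul, abs_of_pos (add_pos hr₁ hr₂), abs_le]
      constructor <;> linarith
    · rw [neg_one_mul, sub_eq_add_neg]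
  exact oscillatory_bound hη hds (by positivity) hlam0'
    (fun x hx => by simp [hva x hx]) sf
end
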